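/- (Proposition 2, combined) Let L be a symmetric positive semidefinite real n×n matrix such that I − L is also positive semidefinite, let P = I − L, and let E(H) = trace(Hᵀ L H). Let λ₀ be a real number with 0 < λ₀ ≤ 1 such that every nonzero eigenvalue of L is at least λ₀. Then for every real n×d matrix X, every natural number l, and every real α with 0 ≤ α ≤ 1, the Dirichlet energy of the GPNN output is bounded above and below in terms of the initial energy: α² · E(X) ≤ E(αX + (1−α)P^l X) ≤ (α² + (1 − λ₀)^l) · E(X). -/

import Mathlib

open Matrix BigOperators

/-!
In an algebra with a continuous functional calculus, the GPNN operator
`M = α • 1 + (1 - α) • (1 - L) ^ l` is `f(L)` for `f x = α + (1 - α) * (1 - x) ^ l`, so the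
Dirichlet energy of `M * X` with respect to `L` is the energy of `X` with respect to
`M L M = (x ↦ f x ^ 2 * x)(L)`. The energy is monotone in the operator, which leaves a comparison
of `f x ^ 2 * x` with multiples of `x` on the spectrum of `L`. There either `x = 0` or
`(1 - x) ^ l ≤ (1 - λ₀) ^ l`, and `α ^ 2 ≤ (α + (1 - α) * t) ^ 2 ≤ α ^ 2 + t` for `0 ≤ t ≤ 1`.
-/

lemma sq_add_one_sub_mul_le (α : ℝ) {t : ℝ} (ht₀ : 0 ≤ t) (ht₁ : t ≤ 1) :
    (α + (1 - α) * t) ^ 2 ≤ α ^ 2 + t := by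
  have ht_sq : t ^ 2 ≤ t := pow_le_of_le_one ht₀ ht₁ two_ne_zero
  calc (α + (1 - α) * t) ^ 2 = α ^ 2 + 2 * α * (1 - α) * t + (1 - α) ^ 2 * t ^ 2 := by ring
    _ ≤ α ^ 2 + 2 * α * (1 - α) * t + (1 - α) ^ 2 * t := by gcongr
    _ = α ^ 2 + t - α ^ 2 * t := by ring
    _ ≤ α ^ 2 + t := sub_le_self _ (by positivity)

section FunctionalCalculus

variable {A : Type*} [Ring A] [Algebra ℝ A]

/-- The GPNN operator `α + (1 - α) Pˡ` with `P = 1 - a`, where `a` plays the role of the Laplacian.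
It combines the initial features (weight `α`) with those propagated `l` times (weight `1 - α`). -/
def gpnnOperator (a : A) (α : ℝ) (l : ℕ) : A :=
  α • 1 + (1 - α) • (1 - a) ^ l

lemma gpnnOperator_mul {m k : Type*} [Fintype m] [DecidableEq m] (L : Matrix m m A) (α : ℝ) (l : ℕ)
    (X : Matrix m k A) :
    gpnnOperator L α l * X = α • X + (1 - α) • ((1 - L) ^ l * X) := by
  simp only [gpnnOperator, Matrix.add_mul, Matrix.smul_mul, Matrix.one_mul]

variable [StarRing A] [TopologicalSpace A] [ContinuousFunctionalCalculus ℝ A IsSelfAdjoint]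

lemma gpnnOperator_eq_cfc {a : A} (ha : IsSelfAdjoint a) (α : ℝ) (l : ℕ) :
    gpnnOperator a α l = cfc (fun x : ℝ ↦ α + (1 - α) * (1 - x) ^ l) a := by
  rw [cfc_const_add α _ a, cfc_const_mul (1 - α) _ a, cfc_pow _ l a, cfc_sub _ _ a,
    cfc_const_one ℝ a, cfc_id' ℝ a, Algebra.algebraMap_eq_smul_one, gpnnOperator]

lemma star_cfc_mul_self_mul_cfc {a : A} (ha : IsSelfAdjoint a) {f : ℝ → ℝ}
    (hf : ContinuousOn f (spectrum ℝ a)) :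
    star (cfc f a) * a * cfc f a = cfc (fun x ↦ f x ^ 2 * x) a := by
  have hcomm : Commute a (cfc f a) := by
    simpa only [cfc_id' ℝ a] using cfc_commute_cfc (fun x : ℝ ↦ x) f a
  rw [(cfc_predicate f a).star_eq, mul_assoc, hcomm.eq, ← mul_assoc, ← sq,
    cfc_mul _ _ a, cfc_pow f 2 a, cfc_id' ℝ a]

variable [PartialOrder A] [StarOrderedRing A]

lemma smul_le_star_cfc_mul_self_mul_cfc {a : A} (ha : IsSelfAdjoint a) {f : ℝ → ℝ}
    (hf : ContinuousOn f (spectrum ℝ a)) {c : ℝ} (h : ∀ x ∈ spectrum ℝ a, c * x ≤ f x ^ 2 * x) :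
    c • a ≤ star (cfc f a) * a * cfc f a := by
  rw [star_cfc_mul_self_mul_cfc ha hf, ← cfc_const_mul_id c a]
  exact cfc_mono h

lemma star_cfc_mul_self_mul_cfc_le_smul {a : A} (ha : IsSelfAdjoint a) {f : ℝ → ℝ}
    (hf : ContinuousOn f (spectrum ℝ a)) {c : ℝ} (h : ∀ x ∈ spectrum ℝ a, f x ^ 2 * x ≤ c * x) :
    star (cfc f a) * a * cfc f a ≤ c • a := by
  rw [star_cfc_mul_self_mul_cfc ha hf, ← cfc_const_mul_id c a]
  exact cfc_mono h

variable [NonnegSpectrumClass ℝ A]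

lemma smul_le_star_gpnnOperator_mul_self_mul {a : A} (ha₀ : 0 ≤ a) (ha₁ : a ≤ 1) (l : ℕ) {α : ℝ}
    (hα₀ : 0 ≤ α) (hα₁ : α ≤ 1) :
    α ^ 2 • a ≤ star (gpnnOperator a α l) * a * gpnnOperator a α l := by
  have ha : IsSelfAdjoint a := .of_nonneg ha₀
  rw [gpnnOperator_eq_cfc ha]
  refine smul_le_star_cfc_mul_self_mul_cfc ha (by fun_prop) fun x hx ↦ ?_
  have hx₀ : 0 ≤ x := spectrum_nonneg_of_nonneg ha₀ hx
  have hx₁ : x ≤ 1 := (CFC.le_one_iff a).mp ha₁ x hx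
  have hpow : 0 ≤ (1 - x) ^ l := pow_nonneg (sub_nonneg.mpr hx₁) l
  gcongr
  exact le_add_of_nonneg_right (mul_nonneg (sub_nonneg.mpr hα₁) hpow)

lemma star_gpnnOperator_mul_self_mul_le_smul {a : A} (ha₀ : 0 ≤ a) (ha₁ : a ≤ 1) {r : ℝ}
    (hr : ∀ x ∈ spectrum ℝ a, x ≠ 0 → r ≤ x) (l : ℕ) (α : ℝ) :
    star (gpnnOperator a α l) * a * gpnnOperator a α l ≤ (α ^ 2 + (1 - r) ^ l) • a := by
  have ha : IsSelfAdjoint a := .of_nonneg ha₀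
  rw [gpnnOperator_eq_cfc ha]
  refine star_cfc_mul_self_mul_cfc_le_smul ha (by fun_prop) fun x hx ↦ ?_
  obtain rfl | hx_ne := eq_or_ne x 0
  · simp
  have hx₀ : 0 ≤ x := spectrum_nonneg_of_nonneg ha₀ hx
  have hx₁ : 0 ≤ 1 - x := sub_nonneg.mpr ((CFC.le_one_iff a).mp ha₁ x hx)
  have hdecay : (1 - x) ^ l ≤ (1 - r) ^ l := by
    gcongr
    exact hr x hx hx_ne
  have hle_one : (1 - x) ^ l ≤ 1 := pow_le_one₀ hx₁ (sub_le_self 1 hx₀)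
  gcongr
  exact (sq_add_one_sub_mul_le α (pow_nonneg hx₁ l) hle_one).trans (by gcongr)

end FunctionalCalculus

section DirichletEnergy

open scoped ComplexOrder MatrixOrder

variable {𝕜 m k : Type*} [RCLike 𝕜] [Fintype m] [Fintype k]

/-- The Dirichlet energy `trace (Hᴴ L H)` of the features `H` with respect to `L`. For Hermitian `L`
this trace is real; taking its real part makes the energy real-valued for every `L`. -/
noncomputable def dirichletEnergy (L : Matrix m m 𝕜) (H : Matrix m k 𝕜) : ℝ :=
  RCLike.re (Hᴴ * L * H).trace

lemma dirichletEnergy_smul_left (c : ℝ) (L : Matrix m m 𝕜) (H : Matrix m k 𝕜) :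
    dirichletEnergy (c • L) H = c * dirichletEnergy L H := by
  simp only [dirichletEnergy, Matrix.mul_smul, Matrix.smul_mul, trace_smul, RCLike.smul_re]

lemma dirichletEnergy_mul_right {p : Type*} [Fintype p] (L : Matrix m m 𝕜) (M : Matrix m p 𝕜)
    (H : Matrix p k 𝕜) : dirichletEnergy L (M * H) = dirichletEnergy (Mᴴ * L * M) H := by
  simp only [dirichletEnergy, conjTranspose_mul, Matrix.mul_assoc]

lemma dirichletEnergy_mono_left {L₁ L₂ : Matrix m m 𝕜} (h : L₁ ≤ L₂) (H : Matrix m k 𝕜) :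
    dirichletEnergy L₁ H ≤ dirichletEnergy L₂ H := by
  have htrace : 0 ≤ (Hᴴ * (L₂ - L₁) * H).trace := (h.conjTranspose_mul_mul_same H).trace_nonneg
  rw [Matrix.mul_sub, Matrix.sub_mul, trace_sub, sub_nonneg] at htrace
  exact RCLike.re_le_re htrace

theorem gpnn_energy_bounds_general [DecidableEq m] {L : Matrix m m 𝕜} (hL : L.PosSemidef)
    (hIL : (1 - L).PosSemidef) {r : ℝ} (hr : ∀ μ ∈ spectrum ℝ L, μ ≠ 0 → r ≤ μ)
    (X : Matrix m k 𝕜) (l : ℕ) {α : ℝ} (hα₀ : 0 ≤ α) (hα₁ : α ≤ 1) :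
    α ^ 2 * dirichletEnergy L X ≤
        dirichletEnergy L (α • X + (1 - α) • ((1 - L) ^ l * X)) ∧
      dirichletEnergy L (α • X + (1 - α) • ((1 - L) ^ l * X)) ≤
        (α ^ 2 + (1 - r) ^ l) * dirichletEnergy L X := by
  rw [← gpnnOperator_mul, dirichletEnergy_mul_right, ← dirichletEnergy_smul_left,
    ← dirichletEnergy_smul_left]
  exact ⟨dirichletEnergy_mono_left
      (smul_le_star_gpnnOperator_mul_self_mul hL.nonneg hIL l hα₀ hα₁) X,
    dirichletEnergy_mono_left
      (star_gpnnOperator_mul_self_mul_le_smul hL.nonneg hIL hr l α) X⟩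

end DirichletEnergy

/-- Proposition 2 (combined): the Dirichlet energy of the GPNN output satisfies
`α² E(X) ≤ E(αX + (1−α)P^l X) ≤ (α² + (1−λ₀)^l) E(X)`. -/
theorem gpnn_energy_bounds (n d : ℕ) (L : Matrix (Fin n) (Fin n) ℝ)
    (hL : L.PosSemidef) (hIL : ((1 : Matrix (Fin n) (Fin n) ℝ) - L).PosSemidef)
    (P : Matrix (Fin n) (Fin n) ℝ) (hP : P = 1 - L)
    (lam0 : ℝ) (hlam0 : 0 < lam0) (hlam1 : lam0 ≤ 1)
    (hspec : ∀ μ ∈ spectrum ℝ L, μ ≠ 0 → lam0 ≤ μ)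
    (X : Matrix (Fin n) (Fin d) ℝ) (l : ℕ) (α : ℝ) (hα0 : 0 ≤ α) (hα1 : α ≤ 1) :
    α ^ 2 * (Xᵀ * L * X).trace ≤
      ((α • X + (1 - α) • (P ^ l * X))ᵀ * L *
        (α • X + (1 - α) • (P ^ l * X))).trace ∧
    ((α • X + (1 - α) • (P ^ l * X))ᵀ * L *
        (α • X + (1 - α) • (P ^ l * X))).trace ≤
      (α ^ 2 + (1 - lam0) ^ l) * (Xᵀ * L * X).trace := by
  subst hP
  exact gpnn_energy_bounds_general hL hIL hspec X l hα0 hα1
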